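/- Let p = 2m be a positive even integer, H a complex Hilbert space with grading operator ε, and F bounded with F² = 1 and Fε = −εF. Let A be a ℂ-algebra and for each t ∈ [0,1] let ρ_t : A → B(H) be a homomorphism into even operators such that for each a ∈ A: (1) [F,ρ_t(a)] = Fρ_t(a) − ρ_t(a)F is p-Schatten and t ↦ [F,ρ_t(a)] is continuous from [0,1] into the p-Schatten operators with the p-Schatten norm; (2) t ↦ ρ_t(a) is C¹ in operator norm, with derivative δ_t(a). Then for all a₀,…,a_p ∈ A the function t ↦ τ^p_t(a₀,…,a_p) := (2iπ)^m m! Trace(ε ρ_t(a₀)[F,ρ_t(a₁)]⋯[F,ρ_t(a_p)]) is differentiable on [0,1] with derivative (d/dt) τ^p_t(a₀,…,a_p) = (2iπ)^m m! Σ_{k=0}^{p} (−1)^k Trace(ε [F,ρ_t(a₀)]⋯[F,ρ_t(a_{k−1})] δ_t(a_k) [F,ρ_t(a_{k+1})]⋯[F,ρ_t(a_p)]) (for k = 0 the product preceding δ_t(a₀) is empty). -/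

import Mathlib

open scoped ENNReal

noncomputable section

variable {H : Type*} [NormedAddCommGroup H] [InnerProductSpace ℂ H] [CompleteSpace H]
variable {A : Type*} [NonUnitalRing A] [Module ℂ A] [SMulCommClass ℂ A A] [IsScalarTower ℂ A A]

/-- The `n`-th singular value of a (compact) operator `T` (approximation numbers). -/
def sval (T : H →L[ℂ] H) (n : ℕ) : ℝ :=
  sInf {c : ℝ | ∃ R : H →L[ℂ] H,
    Module.rank ℂ (LinearMap.range (R : H →ₗ[ℂ] H)) ≤ (n : Cardinal) ∧ c = ‖T - R‖}

/-- The `p`-Schatten norm `‖T‖_p = (Σ_n s_n(T)^p)^(1/p)`, valued in `ℝ≥0∞`. -/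
def schattenNorm (p : ℝ) (T : H →L[ℂ] H) : ℝ≥0∞ :=
  (∑' n : ℕ, ENNReal.ofReal (sval T n ^ p)) ^ (1 / p)

/-- `T` is a `p`-Schatten operator: compact with finite `p`-Schatten norm. -/
def MemSchatten (p : ℝ) (T : H →L[ℂ] H) : Prop :=
  IsCompactOperator (⇑T) ∧ schattenNorm p T < ⊤

/-- The trace of an operator, computed in a (choice of) Hilbert basis of `H`. -/
def opTrace (T : H →L[ℂ] H) : ℂ :=
  ∑' i : (exists_hilbertBasis ℂ H).choose,
    @inner ℂ H _ ((exists_hilbertBasis ℂ H).choose_spec.choose i)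
      (T ((exists_hilbertBasis ℂ H).choose_spec.choose i))

/-- The commutator `[F, T] = FT - TF`. -/
def commOp (F T : H →L[ℂ] H) : H →L[ℂ] H := F * T - T * F

/-- The ordered product `f s * f (s+1) * ⋯ * f (s+k-1)` of operators. -/
def opList (f : ℕ → H →L[ℂ] H) (s k : ℕ) : H →L[ℂ] H := ((List.range' s k).map f).prod

/-- Cyclic indexing of a tuple by natural numbers. -/
def natIdx {A : Type*} {m : ℕ} (a : Fin (m + 1) → A) (k : ℕ) : A :=
  a ⟨k % (m + 1), Nat.mod_lt _ (Nat.succ_pos m)⟩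

/-! Write the character as the trace of `ε` times a word and telescope its increment letter by
letter: the `k`-th term contains the increment of the `k`-th letter, the later letters at the new
time and the earlier ones at the old time.  Since `Trace (ε (F X + X F)) = 0` and `F` anticommutes
with every `[F, x]`, the commutator in the `k`-th letter can be moved onto the first letter at the
cost of a sign `(-1) ^ k`.  The increment of `x k` is then the only factor that is not a
commutator, so it is enough to control it in operator norm; the other `p` factors are `p`-Schatten.

Such a product depends continuously on its factors for the nuclear norm, which dominates the trace:
Hölder's inequality bounds the sum of the approximation numbers, and a dyadic sequence of
finite-rank approximations bounds the nuclear norm by that sum.  Dividing the telescoped sum by the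
time increment and passing to the limit in each term gives the derivative. -/

open Filter Topology InnerProductSpace

/-! ### Sums of extended nonnegative reals -/

lemma tsum_le_mul_tsum_mul_of_antitone {f : ℕ → ℝ≥0∞} (hf : Antitone f) {p : ℕ} (hp : p ≠ 0) :
    ∑' n, f n ≤ p * ∑' n, f (p * n) := by
  have : NeZero p := ⟨hp⟩
  rw [← (Nat.divModEquiv p).symm.tsum_eq f, ENNReal.tsum_prod', ← ENNReal.tsum_mul_left]
  refine ENNReal.tsum_le_tsum fun n => ?_
  calc ∑' i : Fin p, f ((Nat.divModEquiv p).symm (n, i))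
      ≤ ∑' _ : Fin p, f (p * n) :=
        ENNReal.tsum_le_tsum fun i => hf (by simp [Nat.divModEquiv, mul_comm])
    _ = p * f (p * n) := by simp

lemma tsum_two_pow_mul_le_of_antitone {a : ℕ → ℝ≥0∞} (ha : Antitone a) :
    ∑' k, 2 ^ k * a (2 ^ k - 1) ≤ 5 * ∑' n, a n := by
  have condensed : ∑' k, 2 ^ k * a (2 ^ k - 1) ≤ a 0 + 2 * ∑' n, a (n - 1) :=
    ENNReal.tsum_condensed_le (f := fun n => a (n - 1)) fun _ _ _ h => ha (by omega)
  have shift : ∑' n, a (n - 1) = a 0 + ∑' n, a n := by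
    simpa using tsum_eq_zero_add' (f := fun n => a (n - 1)) ENNReal.summable
  have head_le : a 0 ≤ ∑' n, a n := ENNReal.le_tsum 0
  calc ∑' k, 2 ^ k * a (2 ^ k - 1) ≤ a 0 + 2 * (a 0 + ∑' n, a n) := shift ▸ condensed
    _ ≤ ∑' n, a n + 2 * (∑' n, a n + ∑' n, a n) := by gcongr
    _ = 5 * ∑' n, a n := by ring

lemma tsum_prod_le_prod_tsum_pow {ι κ : Type*} (s : Finset ι) (hs : s.Nonempty)
    (f : ι → κ → ℝ≥0∞) :
    ∑' n, ∏ i ∈ s, f i n ≤ ∏ i ∈ s, (∑' n, f i n ^ (s.card : ℝ)) ^ (1 / (s.card : ℝ)) := by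
  have hcard : (s.card : ℝ) ≠ 0 := by simpa using hs.ne_empty
  let _ : MeasurableSpace κ := ⊤
  have holder := ENNReal.lintegral_prod_norm_pow_le (μ := MeasureTheory.Measure.count) s
    (f := fun i n => f i n ^ (s.card : ℝ)) (fun _ _ => measurable_from_top.aemeasurable)
    (p := fun _ => 1 / (s.card : ℝ)) (by simp [hcard]) fun _ _ => by positivity
  simpa only [MeasureTheory.lintegral_count, ← ENNReal.rpow_mul, mul_one_div_cancel hcard,
    ENNReal.rpow_one] using holder

section ApproximationNumbers

variable {E : Type*} [NormedAddCommGroup E] [InnerProductSpace ℂ E]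

/-! ### Approximation numbers -/

lemma rank_neg (R : E →L[ℂ] E) : ((-R : E →L[ℂ] E) : E →ₗ[ℂ] E).rank = (R : E →ₗ[ℂ] E).rank := by
  rw [ContinuousLinearMap.toLinearMap_neg, LinearMap.rank, LinearMap.range_neg]

lemma rank_add_le {R S : E →L[ℂ] E} {j k : ℕ} (hR : (R : E →ₗ[ℂ] E).rank ≤ j)
    (hS : (S : E →ₗ[ℂ] E).rank ≤ k) :
    ((R + S : E →L[ℂ] E) : E →ₗ[ℂ] E).rank ≤ (j + k : ℕ) := by
  rw [Nat.cast_add]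
  exact (LinearMap.rank_add_le (R : E →ₗ[ℂ] E) S).trans (add_le_add hR hS)

lemma sval_nonneg (T : E →L[ℂ] E) (n : ℕ) : 0 ≤ sval T n := by
  refine Real.sInf_nonneg ?_
  rintro c ⟨R, -, rfl⟩
  exact norm_nonneg _

lemma sval_le_norm_sub (T : E →L[ℂ] E) {R : E →L[ℂ] E} {n : ℕ} (hR : (R : E →ₗ[ℂ] E).rank ≤ n) :
    sval T n ≤ ‖T - R‖ := by
  refine csInf_le ⟨0, ?_⟩ ⟨R, hR, rfl⟩
  rintro c ⟨R, -, rfl⟩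
  exact norm_nonneg _

lemma sval_le_norm (T : E →L[ℂ] E) (n : ℕ) : sval T n ≤ ‖T‖ := by
  simpa using sval_le_norm_sub T (R := 0) (n := n) (by simp)

lemma exists_rank_le_norm_sub_lt {T : E →L[ℂ] E} {n : ℕ} {c : ℝ} (h : sval T n < c) :
    ∃ R : E →L[ℂ] E, (R : E →ₗ[ℂ] E).rank ≤ n ∧ ‖T - R‖ < c := by
  have nonempty : {c : ℝ | ∃ R : E →L[ℂ] E, (R : E →ₗ[ℂ] E).rank ≤ n ∧ c = ‖T - R‖}.Nonempty :=
    ⟨_, 0, by simp, rfl⟩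
  obtain ⟨_, ⟨R, hR, rfl⟩, hc⟩ := exists_lt_of_csInf_lt nonempty h
  exact ⟨R, hR, hc⟩

lemma exists_rank_le_enorm_sub_lt {T : E →L[ℂ] E} {n : ℕ} {c : ℝ≥0∞}
    (h : ENNReal.ofReal (sval T n) < c) :
    ∃ R : E →L[ℂ] E, (R : E →ₗ[ℂ] E).rank ≤ n ∧ ‖T - R‖ₑ < c := by
  obtain ⟨r, -, hTr, hrc⟩ := ENNReal.lt_iff_exists_real_btwn.1 h
  obtain ⟨R, hR, hRr⟩ := exists_rank_le_norm_sub_lt (ENNReal.ofReal_lt_ofReal_iff'.1 hTr).1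
  refine ⟨R, hR, lt_of_le_of_lt ?_ hrc⟩
  rw [← ofReal_norm]
  exact ENNReal.ofReal_le_ofReal hRr.le

lemma sval_antitone (T : E →L[ℂ] E) : Antitone (sval T) := by
  refine fun n k hnk => le_of_forall_gt fun c hc => ?_
  obtain ⟨R, hR, hRc⟩ := exists_rank_le_norm_sub_lt hc
  exact (sval_le_norm_sub T (hR.trans (mod_cast hnk))).trans_lt hRc

lemma sval_zero (n : ℕ) : sval (0 : E →L[ℂ] E) n = 0 :=
  le_antisymm (by simpa using sval_le_norm (0 : E →L[ℂ] E) n) (sval_nonneg _ _)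

lemma sval_neg (T : E →L[ℂ] E) (n : ℕ) : sval (-T) n = sval T n := by
  have neg_le (S : E →L[ℂ] E) : sval (-S) n ≤ sval S n := by
    refine le_of_forall_gt fun c hc => ?_
    obtain ⟨R, hR, hRc⟩ := exists_rank_le_norm_sub_lt hc
    refine (sval_le_norm_sub (-S) ((rank_neg R).trans_le hR)).trans_lt ?_
    rwa [← neg_sub', norm_neg]
  exact (neg_le T).antisymm (by simpa using neg_le (-T))

lemma sval_add_le (S T : E →L[ℂ] E) (j k : ℕ) : sval (S + T) (j + k) ≤ sval S j + sval T k := by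
  refine le_add_of_forall_lt fun c hc d hd => ?_
  obtain ⟨Q, hQ, hQc⟩ := exists_rank_le_norm_sub_lt hc
  obtain ⟨R, hR, hRd⟩ := exists_rank_le_norm_sub_lt hd
  calc sval (S + T) (j + k) ≤ ‖S + T - (Q + R)‖ := sval_le_norm_sub _ (rank_add_le hQ hR)
    _ = ‖(S - Q) + (T - R)‖ := by rw [add_sub_add_comm]
    _ ≤ c + d := (norm_add_le _ _).trans (add_le_add hQc.le hRd.le)

lemma sval_mul_le (S T : E →L[ℂ] E) (j k : ℕ) : sval (S * T) (j + k) ≤ sval S j * sval T k := by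
  refine le_mul_of_forall_lt₀ fun c hc d hd => ?_
  obtain ⟨Q, hQ, hQc⟩ := exists_rank_le_norm_sub_lt hc
  obtain ⟨R, hR, hRd⟩ := exists_rank_le_norm_sub_lt hd
  have hQT : ((Q * T : E →L[ℂ] E) : E →ₗ[ℂ] E).rank ≤ j :=
    (LinearMap.rank_comp_le_left (T : E →ₗ[ℂ] E) (Q : E →ₗ[ℂ] E)).trans hQ
  have hSR : (((S - Q) * R : E →L[ℂ] E) : E →ₗ[ℂ] E).rank ≤ k :=
    (LinearMap.rank_comp_le_right (R : E →ₗ[ℂ] E) ((S - Q : E →L[ℂ] E) : E →ₗ[ℂ] E)).trans hR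
  calc sval (S * T) (j + k) ≤ ‖S * T - (Q * T + (S - Q) * R)‖ :=
        sval_le_norm_sub _ (rank_add_le hQT hSR)
    _ = ‖(S - Q) * (T - R)‖ := by congr 1; noncomm_ring
    _ ≤ ‖S - Q‖ * ‖T - R‖ := norm_mul_le _ _
    _ ≤ c * d := mul_le_mul hQc.le hRd.le (norm_nonneg _) ((norm_nonneg _).trans hQc.le)

/-! ### Schatten norms -/

lemma schattenNorm_eq_tsum_rpow {p : ℝ} (hp : 0 ≤ p) (T : E →L[ℂ] E) :
    schattenNorm p T = (∑' n, ENNReal.ofReal (sval T n) ^ p) ^ (1 / p) := by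
  simp only [schattenNorm, ENNReal.ofReal_rpow_of_nonneg (sval_nonneg _ _) hp]

lemma schattenNorm_zero {p : ℝ} (hp : 0 < p) : schattenNorm p (0 : E →L[ℂ] E) = 0 := by
  simp [schattenNorm, sval_zero, Real.zero_rpow hp.ne', hp]

lemma schattenNorm_neg (p : ℝ) (T : E →L[ℂ] E) : schattenNorm p (-T) = schattenNorm p T := by
  simp only [schattenNorm, sval_neg]

lemma schattenNorm_add_le {p : ℝ} (hp : 1 ≤ p) (S T : E →L[ℂ] E) :
    schattenNorm p (S + T) ≤ 2 * (schattenNorm p S + schattenNorm p T) := by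
  have hp0 : 0 < p := by linarith
  simp only [schattenNorm_eq_tsum_rpow hp0.le]
  have minkowski := ENNReal.lintegral_Lp_add_le (μ := MeasureTheory.Measure.count)
    (f := fun n => ENNReal.ofReal (sval S n)) (g := fun n => ENNReal.ofReal (sval T n))
    (by fun_prop) (by fun_prop) hp
  simp only [MeasureTheory.lintegral_count, Pi.add_apply] at minkowski
  have halve : ∑' n, ENNReal.ofReal (sval (S + T) n) ^ p ≤
      2 * ∑' n, (ENNReal.ofReal (sval S n) + ENNReal.ofReal (sval T n)) ^ p := by
    have anti : Antitone fun n => ENNReal.ofReal (sval (S + T) n) ^ p := fun _ _ h =>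
      ENNReal.rpow_le_rpow (ENNReal.ofReal_le_ofReal (sval_antitone _ h)) hp0.le
    refine (tsum_le_mul_tsum_mul_of_antitone anti two_ne_zero).trans ?_
    push_cast
    gcongr with n
    rw [← ENNReal.ofReal_add (sval_nonneg _ _) (sval_nonneg _ _), two_mul]
    exact ENNReal.ofReal_le_ofReal (sval_add_le _ _ _ _)
  have two_rpow_le : (2 : ℝ≥0∞) ^ (1 / p) ≤ 2 := by
    simpa using ENNReal.rpow_le_rpow_of_exponent_le (x := 2) one_le_two ((div_le_one hp0).2 hp)
  calc (∑' n, ENNReal.ofReal (sval (S + T) n) ^ p) ^ (1 / p)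
      ≤ (2 * ∑' n, (ENNReal.ofReal (sval S n) + ENNReal.ofReal (sval T n)) ^ p) ^ (1 / p) := by
        gcongr
    _ = 2 ^ (1 / p) *
          (∑' n, (ENNReal.ofReal (sval S n) + ENNReal.ofReal (sval T n)) ^ p) ^ (1 / p) :=
        ENNReal.mul_rpow_of_nonneg _ _ (by positivity)
    _ ≤ _ := mul_le_mul' two_rpow_le minkowski

lemma schattenNorm_sub_le {p : ℝ} (hp : 1 ≤ p) (S T : E →L[ℂ] E) :
    schattenNorm p (S - T) ≤ 2 * (schattenNorm p S + schattenNorm p T) := by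
  simpa only [sub_eq_add_neg, schattenNorm_neg] using schattenNorm_add_le hp S (-T)

lemma eventually_schattenNorm_ne_top {α : Type*} {l : Filter α} {p : ℝ} (hp : 1 ≤ p)
    {S : α → E →L[ℂ] E} {T : E →L[ℂ] E} (hT : schattenNorm p T ≠ ⊤)
    (h : Tendsto (fun a => schattenNorm p (S a - T)) l (𝓝 0)) :
    ∀ᶠ a in l, schattenNorm p (S a) ≠ ⊤ := by
  filter_upwards [h.eventually_ne ENNReal.zero_ne_top] with a ha
  rw [← sub_add_cancel (S a) T]
  exact ne_top_of_le_ne_top (ENNReal.mul_ne_top ENNReal.ofNat_ne_top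
    (ENNReal.add_ne_top.2 ⟨ha, hT⟩)) (schattenNorm_add_le hp _ _)

end ApproximationNumbers

section NuclearNorm

/-! ### The nuclear norm -/

variable {E : Type*} [NormedAddCommGroup E] [InnerProductSpace ℂ E]

/-- The nuclear norm of an operator, which is finite exactly on the trace class: the infimum of
`∑ ‖u j‖ ‖v j‖` over all decompositions of the operator into a norm-convergent unordered sum of
rank-one operators `x ↦ ⟪v j, x⟫ • u j`. -/
def nuclearNorm (T : E →L[ℂ] E) : ℝ≥0∞ :=
  ⨅ (ι : Type) (u : ι → E) (v : ι → E) (_ : HasSum (fun j => rankOne ℂ (u j) (v j)) T),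
    ∑' j, ‖u j‖ₑ * ‖v j‖ₑ

lemma nuclearNorm_le_tsum {T : E →L[ℂ] E} {ι : Type} {u v : ι → E}
    (h : HasSum (fun j => rankOne ℂ (u j) (v j)) T) :
    nuclearNorm T ≤ ∑' j, ‖u j‖ₑ * ‖v j‖ₑ :=
  iInf₂_le_of_le ι u (iInf₂_le v h)

lemma exists_hasSum_rankOne_of_nuclearNorm_lt {T : E →L[ℂ] E} {c : ℝ≥0∞}
    (h : nuclearNorm T < c) :
    ∃ (ι : Type) (u v : ι → E),
      HasSum (fun j => rankOne ℂ (u j) (v j)) T ∧ ∑' j, ‖u j‖ₑ * ‖v j‖ₑ < c := by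
  simpa only [nuclearNorm, iInf_lt_iff, exists_prop] using h

lemma nuclearNorm_zero : nuclearNorm (0 : E →L[ℂ] E) = 0 := by
  simpa using nuclearNorm_le_tsum (T := (0 : E →L[ℂ] E)) (u := Empty.elim) (v := Empty.elim)
    (by simp)

lemma tsum_enorm_apply_mul_enorm_le (B : E →L[ℂ] E) {ι : Type*} (u v : ι → E) :
    ∑' j, ‖B (u j)‖ₑ * ‖v j‖ₑ ≤ ‖B‖ₑ * ∑' j, ‖u j‖ₑ * ‖v j‖ₑ := by
  rw [← ENNReal.tsum_mul_left]
  refine ENNReal.tsum_le_tsum fun j => ?_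
  rw [← mul_assoc]
  gcongr
  exact B.le_opENorm (u j)

lemma nuclearNorm_mul_le (B T : E →L[ℂ] E) : nuclearNorm (B * T) ≤ ‖B‖ₑ * nuclearNorm T := by
  rcases eq_or_ne B 0 with rfl | hB
  · simp [nuclearNorm_zero]
  have hB' : ‖B‖ₑ ≠ 0 := by simpa [← ofReal_norm] using hB
  refine ENNReal.le_mul_of_forall_lt (.inl hB') (.inl enorm_ne_top) fun b hb c hc => ?_
  obtain ⟨ι, u, v, hT, huv⟩ := exists_hasSum_rankOne_of_nuclearNorm_lt hc
  have hBT : HasSum (fun j => rankOne ℂ (B (u j)) (v j)) (B * T) := by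
    simpa only [ContinuousLinearMap.mul_def, comp_rankOne] using hT.mul_left B
  calc nuclearNorm (B * T) ≤ ∑' j, ‖B (u j)‖ₑ * ‖v j‖ₑ := nuclearNorm_le_tsum hBT
    _ ≤ ‖B‖ₑ * ∑' j, ‖u j‖ₑ * ‖v j‖ₑ := tsum_enorm_apply_mul_enorm_le B u v
    _ ≤ b * c := mul_le_mul' hb.le huv.le

lemma nuclearNorm_mul_ne_top (B : E →L[ℂ] E) {T : E →L[ℂ] E} (hT : nuclearNorm T ≠ ⊤) :
    nuclearNorm (B * T) ≠ ⊤ :=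
  ne_top_of_le_ne_top (ENNReal.mul_ne_top enorm_ne_top hT) (nuclearNorm_mul_le B T)

lemma nuclearNorm_tsum_le {κ : Type} [Countable κ] {S : κ → H →L[ℂ] H} {T : H →L[ℂ] H}
    (h : HasSum S T) : nuclearNorm T ≤ ∑' k, nuclearNorm (S k) := by
  refine ENNReal.le_of_forall_pos_le_add fun η hη hfin => ?_
  obtain ⟨w, hw_pos, hw_sum⟩ :=
    ENNReal.exists_pos_sum_of_countable' (ENNReal.coe_ne_zero.2 hη.ne') κ
  have decompose (k : κ) := exists_hasSum_rankOne_of_nuclearNorm_lt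
    (ENNReal.lt_add_right (ENNReal.ne_top_of_tsum_ne_top hfin.ne k) (hw_pos k).ne')
  choose ι u v hS huv using decompose
  have weight_le : ∑' j : Σ k, ι k, ‖u j.1 j.2‖ₑ * ‖v j.1 j.2‖ₑ ≤ ∑' k, nuclearNorm (S k) + η :=
    calc ∑' j : Σ k, ι k, ‖u j.1 j.2‖ₑ * ‖v j.1 j.2‖ₑ
        = ∑' k, ∑' i, ‖u k i‖ₑ * ‖v k i‖ₑ := ENNReal.tsum_sigma' _
      _ ≤ ∑' k, (nuclearNorm (S k) + w k) := ENNReal.tsum_le_tsum fun k => (huv k).le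
      _ = ∑' k, nuclearNorm (S k) + ∑' k, w k := ENNReal.tsum_add
      _ ≤ _ := by gcongr
  have summable : Summable fun j : Σ k, ι k => rankOne ℂ (u j.1 j.2) (v j.1 j.2) := by
    refine Summable.of_enorm ?_
    simp only [enorm_rankOne]
    exact (weight_le.trans_lt (ENNReal.add_lt_top.2 ⟨hfin, ENNReal.coe_lt_top⟩)).ne
  have hT : HasSum (fun j : Σ k, ι k => rankOne ℂ (u j.1 j.2) (v j.1 j.2)) T :=
    HasSum.sigma_of_hasSum h hS summable
  exact (nuclearNorm_le_tsum hT).trans weight_le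

lemma nuclearNorm_add_le (S T : H →L[ℂ] H) :
    nuclearNorm (S + T) ≤ nuclearNorm S + nuclearNorm T := by
  simpa [add_comm] using
    nuclearNorm_tsum_le (hasSum_fintype fun b : Bool => cond b S T)

lemma nuclearNorm_sum_le {ι : Type*} (s : Finset ι) (T : ι → H →L[ℂ] H) :
    nuclearNorm (∑ i ∈ s, T i) ≤ ∑ i ∈ s, nuclearNorm (T i) :=
  Finset.le_sum_of_subadditive _ nuclearNorm_zero.le nuclearNorm_add_le s T

lemma nuclearNorm_le_of_rank_le {T : H →L[ℂ] H} {n : ℕ} (hT : (T : H →ₗ[ℂ] H).rank ≤ n) :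
    nuclearNorm T ≤ n * ‖T‖ₑ := by
  have : FiniteDimensional ℂ (LinearMap.range (T : H →ₗ[ℂ] H)) :=
    Module.rank_lt_aleph0_iff.1 (hT.trans_lt Cardinal.natCast_lt_aleph0)
  let b := stdOrthonormalBasis ℂ (LinearMap.range (T : H →ₗ[ℂ] H))
  have expand : HasSum (fun i => rankOne ℂ (b i : H) (T.adjoint (b i))) T := by
    suffices ∑ i, rankOne ℂ (b i : H) (T.adjoint (b i)) = T by
      simpa only [this] using hasSum_fintype fun i => rankOne ℂ (b i : H) (T.adjoint (b i))
    ext x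
    simpa [ContinuousLinearMap.adjoint_inner_left] using
      congrArg Subtype.val (b.sum_repr' ⟨T x, x, rfl⟩)
  calc nuclearNorm T ≤ ∑' i, ‖(b i : H)‖ₑ * ‖T.adjoint (b i)‖ₑ := nuclearNorm_le_tsum expand
    _ ≤ ∑' _ : Fin (Module.finrank ℂ (LinearMap.range (T : H →ₗ[ℂ] H))), ‖T‖ₑ := by
        refine ENNReal.tsum_le_tsum fun i => ?_
        have norm_b : ‖(b i : H)‖ₑ = 1 := by
          rw [← ofReal_norm, Submodule.norm_coe, b.orthonormal.1 i, ENNReal.ofReal_one]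
        have norm_adjoint : ‖T.adjoint‖ₑ = ‖T‖ₑ := by simp [← ofReal_norm]
        simpa [norm_b, norm_adjoint] using T.adjoint.le_opENorm (b i)
    _ = Module.finrank ℂ (LinearMap.range (T : H →ₗ[ℂ] H)) * ‖T‖ₑ := by simp
    _ ≤ n * ‖T‖ₑ := by
        gcongr
        exact Module.finrank_le_of_rank_le hT

lemma exists_rank_le_two_pow_enorm_sub_lt {T : E →L[ℂ] E} {a : ℕ → ℝ≥0∞}
    (hT : ∀ n, ENNReal.ofReal (sval T n) < a n) :
    ∃ R : ℕ → E →L[ℂ] E, R 0 = 0 ∧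
      ∀ k, (R k : E →ₗ[ℂ] E).rank ≤ (2 ^ k - 1 : ℕ) ∧ ‖T - R k‖ₑ < a (2 ^ k - 1) := by
  choose R hR hTR using fun k => exists_rank_le_enorm_sub_lt (hT (2 ^ k - 1))
  have rank_zero : (R 0 : E →ₗ[ℂ] E).rank = 0 := by simpa using hR 0
  exact ⟨R, ContinuousLinearMap.coe_injective
    (LinearMap.range_eq_bot.1 (Submodule.rank_eq_zero.1 rank_zero)), fun k => ⟨hR k, hTR k⟩⟩

lemma exists_hasSum_rank_le_enorm_le {T : H →L[ℂ] H} {a : ℕ → ℝ≥0∞} (ha : Antitone a)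
    (hfin : ∑' n, a n ≠ ⊤) (hT : ∀ n, ENNReal.ofReal (sval T n) < a n) :
    ∃ S : ℕ → H →L[ℂ] H, HasSum S T ∧
      ∀ k, (S k : H →ₗ[ℂ] H).rank ≤ (3 * 2 ^ k : ℕ) ∧ ‖S k‖ₑ ≤ 2 * a (2 ^ k - 1) := by
  obtain ⟨R, R_zero, hR⟩ := exists_rank_le_two_pow_enorm_sub_lt hT
  have rank_diff (k : ℕ) : ((R (k + 1) - R k : H →L[ℂ] H) : H →ₗ[ℂ] H).rank ≤ (3 * 2 ^ k : ℕ) := by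
    rw [sub_eq_add_neg]
    refine (rank_add_le (hR (k + 1)).1 ((rank_neg _).trans_le (hR k).1)).trans ?_
    exact_mod_cast (by omega : 2 ^ (k + 1) - 1 + (2 ^ k - 1) ≤ 3 * 2 ^ k)
  have enorm_diff (k : ℕ) : ‖R (k + 1) - R k‖ₑ ≤ 2 * a (2 ^ k - 1) :=
    calc ‖R (k + 1) - R k‖ₑ = ‖(T - R k) - (T - R (k + 1))‖ₑ := by rw [sub_sub_sub_cancel_left]
      _ ≤ ‖T - R k‖ₑ + ‖T - R (k + 1)‖ₑ := enorm_sub_le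
      _ ≤ a (2 ^ k - 1) + a (2 ^ (k + 1) - 1) := add_le_add (hR k).2.le (hR (k + 1)).2.le
      _ ≤ a (2 ^ k - 1) + a (2 ^ k - 1) := by gcongr; exact ha (by omega)
      _ = 2 * a (2 ^ k - 1) := (two_mul _).symm
  have condensed_ne_top : ∑' k, 2 ^ k * a (2 ^ k - 1) ≠ ⊤ :=
    ne_top_of_le_ne_top (ENNReal.mul_ne_top ENNReal.ofNat_ne_top hfin)
      (tsum_two_pow_mul_le_of_antitone ha)
  have le_condensed (k : ℕ) : a (2 ^ k - 1) ≤ 2 ^ k * a (2 ^ k - 1) :=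
    le_mul_of_one_le_left' (one_le_pow_of_one_le' one_le_two k)
  have summable_diff : Summable fun k => R (k + 1) - R k := by
    refine Summable.of_enorm (ne_top_of_le_ne_top
      (ENNReal.mul_ne_top (ENNReal.ofNat_ne_top (n := 2)) condensed_ne_top) ?_)
    rw [← ENNReal.tsum_mul_left]
    exact ENNReal.tsum_le_tsum fun k => (enorm_diff k).trans (by gcongr; exact le_condensed k)
  have tendsto_R : Tendsto R atTop (𝓝 T) := by
    rw [tendsto_iff_edist_tendsto_0]
    refine tendsto_of_tendsto_of_tendsto_of_le_of_le tendsto_const_nhds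
      (ENNReal.tendsto_atTop_zero_of_tsum_ne_top condensed_ne_top) (fun _ => zero_le) fun k => ?_
    rw [edist_comm, edist_eq_enorm_sub]
    exact (hR k).2.le.trans (le_condensed k)
  have telescope : HasSum (fun k => R (k + 1) - R k) T := by
    rw [summable_diff.hasSum_iff_tendsto_nat]
    simpa only [Finset.sum_range_sub, R_zero, sub_zero] using tendsto_R
  exact ⟨_, telescope, fun k => ⟨rank_diff k, enorm_diff k⟩⟩

lemma nuclearNorm_le_of_sval_lt {T : H →L[ℂ] H} {a : ℕ → ℝ≥0∞} (ha : Antitone a)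
    (hT : ∀ n, ENNReal.ofReal (sval T n) < a n) : nuclearNorm T ≤ 30 * ∑' n, a n := by
  rcases eq_or_ne (∑' n, a n) ⊤ with h | hfin
  · simp [h]
  obtain ⟨S, hST, hS⟩ := exists_hasSum_rank_le_enorm_le ha hfin hT
  calc nuclearNorm T ≤ ∑' k, nuclearNorm (S k) := nuclearNorm_tsum_le hST
    _ ≤ ∑' k, (3 * 2 ^ k : ℕ) * (2 * a (2 ^ k - 1)) := by
        refine ENNReal.tsum_le_tsum fun k => (nuclearNorm_le_of_rank_le (hS k).1).trans ?_
        gcongr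
        exact (hS k).2
    _ = 6 * ∑' k, 2 ^ k * a (2 ^ k - 1) := by
        rw [← ENNReal.tsum_mul_left]
        exact tsum_congr fun k => by push_cast; ring
    _ ≤ 6 * (5 * ∑' n, a n) := by gcongr; exact tsum_two_pow_mul_le_of_antitone ha
    _ = 30 * ∑' n, a n := by ring

lemma nuclearNorm_le_tsum_sval (T : H →L[ℂ] H) :
    nuclearNorm T ≤ 30 * ∑' n, ENNReal.ofReal (sval T n) := by
  refine ENNReal.le_of_forall_pos_le_add fun η hη _ => ?_
  let a (n : ℕ) : ℝ≥0∞ := ENNReal.ofReal (sval T n) + η / 60 * 2⁻¹ ^ n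
  have ha : Antitone a := fun i j hij => by
    refine add_le_add (ENNReal.ofReal_le_ofReal (sval_antitone T hij)) ?_
    gcongr _ * ?_
    exact pow_le_pow_right_of_le_one' (ENNReal.inv_le_one.2 one_le_two) hij
  have lt_a (n : ℕ) : ENNReal.ofReal (sval T n) < a n :=
    ENNReal.lt_add_right ENNReal.ofReal_ne_top (by simp [hη.ne'])
  calc nuclearNorm T ≤ 30 * ∑' n, a n := nuclearNorm_le_of_sval_lt ha lt_a
    _ = 30 * ∑' n, ENNReal.ofReal (sval T n) + η := by
        have geometric : ∑' n : ℕ, (2⁻¹ : ℝ≥0∞) ^ n = 2 := by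
          rw [ENNReal.tsum_geometric, ENNReal.one_sub_inv_two, inv_inv]
        rw [ENNReal.tsum_add, ENNReal.tsum_mul_left, geometric, mul_add]
        congr 1
        calc 30 * ((η : ℝ≥0∞) / 60 * 2) = 60 * (η / 60) := by ring
          _ = η := ENNReal.mul_div_cancel (by simp) (by simp)

/-! ### The trace -/

lemma tsum_enorm_inner_mul_inner_le {ι : Type*} {b : ι → E} (hb : Orthonormal ℂ b) (u v : E) :
    ∑' i, ‖inner ℂ v (b i) * inner ℂ (b i) u‖ₑ ≤ ‖u‖ₑ * ‖v‖ₑ := by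
  rw [ENNReal.tsum_eq_iSup_sum]
  refine iSup_le fun s => ?_
  have cauchy_schwarz : ∑ i ∈ s, ‖inner ℂ v (b i) * inner ℂ (b i) u‖ ≤ ‖u‖ * ‖v‖ :=
    calc ∑ i ∈ s, ‖inner ℂ v (b i) * inner ℂ (b i) u‖
        = ∑ i ∈ s, ‖inner ℂ (b i) u‖ * ‖inner ℂ (b i) v‖ :=
          Finset.sum_congr rfl fun i _ => by rw [norm_mul, norm_inner_symm v, mul_comm]
      _ ≤ √(∑ i ∈ s, ‖inner ℂ (b i) u‖ ^ 2) * √(∑ i ∈ s, ‖inner ℂ (b i) v‖ ^ 2) :=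
          Real.sum_mul_le_sqrt_mul_sqrt _ _ _
      _ ≤ ‖u‖ * ‖v‖ := by
          gcongr <;> exact Real.sqrt_le_iff.2 ⟨norm_nonneg _, hb.sum_inner_products_le _⟩
  simpa only [← ofReal_norm, ← ENNReal.ofReal_sum_of_nonneg fun _ _ => norm_nonneg _,
    ← ENNReal.ofReal_mul (norm_nonneg u)] using ENNReal.ofReal_le_ofReal cauchy_schwarz

lemma hasSum_inner_of_hasSum_rankOne {κ : Type*} (b : HilbertBasis κ ℂ E) {T : E →L[ℂ] E}
    {ι : Type*} {u v : ι → E} (hT : HasSum (fun j => rankOne ℂ (u j) (v j)) T)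
    (hfin : ∑' j, ‖u j‖ₑ * ‖v j‖ₑ ≠ ⊤) :
    HasSum (fun i => inner ℂ (b i) (T (b i))) (∑' j, inner ℂ (v j) (u j)) := by
  have summable : Summable fun q : ι × κ => inner ℂ (v q.1) (b q.2) * inner ℂ (b q.2) (u q.1) := by
    refine Summable.of_enorm ?_
    rw [ENNReal.tsum_prod (f := fun j i => ‖inner ℂ (v j) (b i) * inner ℂ (b i) (u j)‖ₑ)]
    exact ne_top_of_le_ne_top hfin
      (ENNReal.tsum_le_tsum fun j => tsum_enorm_inner_mul_inner_le b.orthonormal (u j) (v j))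
  have sum_basis (j : ι) :
      HasSum (fun i => inner ℂ (v j) (b i) * inner ℂ (b i) (u j)) (inner ℂ (v j) (u j)) :=
    b.hasSum_inner_mul_inner (v j) (u j)
  have sum_rankOne (i : κ) :
      HasSum (fun j => inner ℂ (v j) (b i) * inner ℂ (b i) (u j)) (inner ℂ (b i) (T (b i))) := by
    have evaluate := (hT.mapL (ContinuousLinearMap.apply ℂ E (b i))).mapL (innerSL ℂ (b i))
    simpa [inner_smul_right] using evaluate
  rw [(summable.hasSum.prod_fiberwise sum_basis).tsum_eq]
  exact ((Equiv.prodComm κ ι).hasSum_iff.2 summable.hasSum).prod_fiberwise sum_rankOne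

lemma opTrace_eq_tsum_inner {T : H →L[ℂ] H} {ι : Type*} {u v : ι → H}
    (hT : HasSum (fun j => rankOne ℂ (u j) (v j)) T) (hfin : ∑' j, ‖u j‖ₑ * ‖v j‖ₑ ≠ ⊤) :
    opTrace T = ∑' j, inner ℂ (v j) (u j) :=
  (hasSum_inner_of_hasSum_rankOne _ hT hfin).tsum_eq

lemma summable_opTrace {T : H →L[ℂ] H} (hT : nuclearNorm T ≠ ⊤) :
    Summable fun i : (exists_hilbertBasis ℂ H).choose =>
      inner ℂ ((exists_hilbertBasis ℂ H).choose_spec.choose i)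
        (T ((exists_hilbertBasis ℂ H).choose_spec.choose i)) := by
  obtain ⟨ι, u, v, hT, hfin⟩ := exists_hasSum_rankOne_of_nuclearNorm_lt hT.lt_top
  exact (hasSum_inner_of_hasSum_rankOne _ hT hfin.ne).summable

lemma enorm_opTrace_le (T : H →L[ℂ] H) : ‖opTrace T‖ₑ ≤ nuclearNorm T := by
  refine le_of_forall_gt fun c hc => ?_
  obtain ⟨ι, u, v, hT, huv⟩ := exists_hasSum_rankOne_of_nuclearNorm_lt hc
  refine lt_of_le_of_lt ?_ huv
  rw [opTrace_eq_tsum_inner hT huv.ne_top]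
  refine enorm_tsum_le_tsum_enorm.trans (ENNReal.tsum_le_tsum fun j => ?_)
  rw [mul_comm]
  simpa only [enorm_eq_nnnorm] using mod_cast nnnorm_inner_le_nnnorm (𝕜 := ℂ) (v j) (u j)

lemma opTrace_add {S T : H →L[ℂ] H} (hS : nuclearNorm S ≠ ⊤) (hT : nuclearNorm T ≠ ⊤) :
    opTrace (S + T) = opTrace S + opTrace T := by
  simp only [opTrace, add_apply, inner_add_right]
  exact (summable_opTrace hS).tsum_add (summable_opTrace hT)

lemma opTrace_sub {S T : H →L[ℂ] H} (hS : nuclearNorm S ≠ ⊤) (hT : nuclearNorm T ≠ ⊤) :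
    opTrace (S - T) = opTrace S - opTrace T := by
  simp only [opTrace, sub_apply, inner_sub_right]
  exact (summable_opTrace hS).tsum_sub (summable_opTrace hT)

lemma opTrace_sum {ι : Type*} {s : Finset ι} {T : ι → H →L[ℂ] H}
    (hT : ∀ i ∈ s, nuclearNorm (T i) ≠ ⊤) : opTrace (∑ i ∈ s, T i) = ∑ i ∈ s, opTrace (T i) := by
  simp only [opTrace, sum_apply, inner_sum]
  exact Summable.tsum_finsetSum fun i hi => summable_opTrace (hT i hi)

lemma opTrace_smul (z : ℂ) (T : H →L[ℂ] H) : opTrace (z • T) = z * opTrace T := by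
  simp only [opTrace, smul_apply, inner_smul_right, tsum_mul_left]

lemma opTrace_neg (T : H →L[ℂ] H) : opTrace (-T) = -opTrace T := by
  simp only [opTrace, neg_apply, inner_neg_right, tsum_neg]

lemma opTrace_mul_comm (B : H →L[ℂ] H) {T : H →L[ℂ] H} (hT : nuclearNorm T ≠ ⊤) :
    opTrace (B * T) = opTrace (T * B) := by
  obtain ⟨ι, u, v, hT, hfin⟩ := exists_hasSum_rankOne_of_nuclearNorm_lt hT.lt_top
  have hBT : HasSum (fun j => rankOne ℂ (B (u j)) (v j)) (B * T) := by
    simpa only [ContinuousLinearMap.mul_def, comp_rankOne] using hT.mul_left B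
  have hTB : HasSum (fun j => rankOne ℂ (u j) (B.adjoint (v j))) (T * B) := by
    simpa only [ContinuousLinearMap.mul_def, rankOne_comp] using hT.mul_right B
  have hBT_fin : ∑' j, ‖B (u j)‖ₑ * ‖v j‖ₑ ≠ ⊤ :=
    ne_top_of_le_ne_top (ENNReal.mul_ne_top enorm_ne_top hfin.ne)
      (tsum_enorm_apply_mul_enorm_le B u v)
  have hTB_fin : ∑' j, ‖u j‖ₑ * ‖B.adjoint (v j)‖ₑ ≠ ⊤ := by
    simp only [mul_comm ‖u _‖ₑ] at hfin ⊢
    exact ne_top_of_le_ne_top (ENNReal.mul_ne_top enorm_ne_top hfin.ne)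
      (tsum_enorm_apply_mul_enorm_le B.adjoint v u)
  simp only [opTrace_eq_tsum_inner hBT hBT_fin, opTrace_eq_tsum_inner hTB hTB_fin,
    ContinuousLinearMap.adjoint_inner_left]

lemma tendsto_opTrace_mul {α : Type*} {l : Filter α} {T : α → H →L[ℂ] H} {S : H →L[ℂ] H}
    (B : H →L[ℂ] H) (hS : nuclearNorm S ≠ ⊤)
    (h : Tendsto (fun a => nuclearNorm (T a - S)) l (𝓝 0)) :
    Tendsto (fun a => opTrace (B * T a)) l (𝓝 (opTrace (B * S))) := by
  have lim : Tendsto (fun a => ‖B‖ₑ * nuclearNorm (T a - S)) l (𝓝 0) := by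
    simpa using ENNReal.Tendsto.const_mul h (.inr enorm_ne_top)
  rw [tendsto_iff_edist_tendsto_0]
  refine tendsto_of_tendsto_of_tendsto_of_le_of_le' tendsto_const_nhds lim
    (.of_forall fun _ => zero_le) ?_
  filter_upwards [h.eventually_lt_const ENNReal.zero_lt_top] with a ha
  have difference : opTrace (B * T a) = opTrace (B * (T a - S)) + opTrace (B * S) := by
    rw [← opTrace_add (nuclearNorm_mul_ne_top B ha.ne) (nuclearNorm_mul_ne_top B hS), ← mul_add,
      sub_add_cancel]
  rw [difference, edist_eq_enorm_sub, add_sub_cancel_right]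
  exact (enorm_opTrace_le _).trans (nuclearNorm_mul_le _ _)

end NuclearNorm

section OrderedProducts

/-! ### Ordered products -/

variable {E : Type*} [NormedAddCommGroup E] [InnerProductSpace ℂ E]

/-- The word that agrees with `g` before position `k`, has the letter `D` at position `k`, and
agrees with `f` after it. -/
def splice {M : Type*} (g : ℕ → M) (D : M) (f : ℕ → M) (k i : ℕ) : M :=
  if i < k then g i else if i = k then D else f i

lemma opList_zero (f : ℕ → E →L[ℂ] E) (s : ℕ) : opList f s 0 = 1 := rfl

lemma opList_succ (f : ℕ → E →L[ℂ] E) (s k : ℕ) : opList f s (k + 1) = f s * opList f (s + 1) k :=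
  rfl

lemma opList_add (f : ℕ → E →L[ℂ] E) (s j k : ℕ) :
    opList f s (j + k) = opList f s j * opList f (s + j) k := by
  rw [opList, opList, opList, ← List.prod_append, ← List.map_append, List.range'_append_1]

lemma opList_succ_right (f : ℕ → E →L[ℂ] E) (s k : ℕ) :
    opList f s (k + 1) = opList f s k * f (s + k) := by
  rw [opList_add, opList_succ, opList_zero, mul_one]

lemma opList_congr {f g : ℕ → E →L[ℂ] E} {s k : ℕ} (h : ∀ i, s ≤ i → i < s + k → f i = g i) :
    opList f s k = opList g s k := by
  refine congrArg List.prod (List.map_congr_left fun i hi => ?_)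
  rw [List.mem_range'_1] at hi
  exact h i hi.1 hi.2

lemma opList_splice (g : ℕ → E →L[ℂ] E) (D : E →L[ℂ] E) (f : ℕ → E →L[ℂ] E) {k p : ℕ}
    (hk : k ≤ p) :
    opList (splice g D f k) 0 (p + 1) = opList g 0 k * D * opList f (k + 1) (p - k) := by
  have before : opList (splice g D f k) 0 k = opList g 0 k :=
    opList_congr fun i _ hi => if_pos (by omega)
  have after : opList (splice g D f k) (k + 1) (p - k) = opList f (k + 1) (p - k) :=
    opList_congr fun i hi _ => by rw [splice, if_neg (by omega), if_neg (by omega)]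
  have at_slot : splice g D f k k = D := by simp [splice]
  calc opList (splice g D f k) 0 (p + 1) = opList (splice g D f k) 0 (k + 1 + (p - k)) := by
        congr 1; omega
    _ = opList g 0 k * D * opList f (k + 1) (p - k) := by
        rw [opList_add, opList_succ_right, zero_add, zero_add, before, at_slot, after]

lemma opList_splice_smul (g : ℕ → E →L[ℂ] E) (z : ℂ) (D : E →L[ℂ] E) (f : ℕ → E →L[ℂ] E) {k p : ℕ}
    (hk : k ≤ p) :
    opList (splice g (z • D) f k) 0 (p + 1) = z • opList (splice g D f k) 0 (p + 1) := by
  rw [opList_splice _ _ _ hk, opList_splice _ _ _ hk, mul_smul_comm, smul_mul_assoc]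

lemma opList_sub_opList (f g : ℕ → E →L[ℂ] E) (n : ℕ) :
    opList f 0 n - opList g 0 n =
      ∑ j ∈ Finset.range n, opList (splice g (f j - g j) f j) 0 n := by
  induction n with
  | zero => simp [opList_zero]
  | succ n ih =>
    have extend {j : ℕ} (hj : j ∈ Finset.range n) :
        opList (splice g (f j - g j) f j) 0 (n + 1) =
          opList (splice g (f j - g j) f j) 0 n * f n := by
      have : j < n := Finset.mem_range.1 hj
      rw [opList_succ_right, zero_add, splice, if_neg (by omega), if_neg (by omega)]
    rw [Finset.sum_range_succ, Finset.sum_congr rfl fun j hj => extend hj, ← Finset.sum_mul, ← ih,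
      opList_splice g _ f le_rfl, opList_succ_right, opList_succ_right, Nat.sub_self, opList_zero,
      zero_add]
    noncomm_ring

lemma sval_opList_le (f : ℕ → E →L[ℂ] E) (e : ℕ → ℕ) (k : ℕ) :
    sval (opList f 0 k) (∑ i ∈ Finset.range k, e i) ≤ ∏ i ∈ Finset.range k, sval (f i) (e i) := by
  induction k with
  | zero =>
    rw [opList_zero, Finset.sum_range_zero, Finset.prod_range_zero]
    exact (sval_le_norm 1 0).trans ContinuousLinearMap.norm_id_le
  | succ k ih =>
    rw [opList_succ_right, zero_add, Finset.sum_range_succ, Finset.prod_range_succ]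
    exact (sval_mul_le _ _ _ _).trans (mul_le_mul_of_nonneg_right ih (sval_nonneg _ _))

/-! ### Hölder's inequality with one bounded factor -/

/-- The norm by which the `i`-th factor of a product is measured when all factors are `p`-Schatten
except the `k`-th, which is merely bounded. -/
def slotNorm (p : ℝ) (k i : ℕ) (T : E →L[ℂ] E) : ℝ≥0∞ :=
  if i = k then ‖T‖ₑ else schattenNorm p T

lemma slotNorm_self (p : ℝ) (k : ℕ) (T : E →L[ℂ] E) : slotNorm p k k T = ‖T‖ₑ := if_pos rfl

lemma slotNorm_of_ne (p : ℝ) {k i : ℕ} (h : i ≠ k) (T : E →L[ℂ] E) :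
    slotNorm p k i T = schattenNorm p T := if_neg h

lemma slotNorm_add_le {p : ℝ} (hp : 1 ≤ p) (k i : ℕ) (S T : E →L[ℂ] E) :
    slotNorm p k i (S + T) ≤ 2 * (slotNorm p k i S + slotNorm p k i T) := by
  rcases eq_or_ne i k with rfl | h
  · simp only [slotNorm_self]
    exact (enorm_add_le S T).trans (le_mul_of_one_le_left' one_le_two)
  · simpa only [slotNorm_of_ne p h] using schattenNorm_add_le hp S T

lemma slotNorm_splice_ne_top {p : ℝ} {g f : ℕ → E →L[ℂ] E} {j k n : ℕ} {D : E →L[ℂ] E}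
    (hg : ∀ i < k, slotNorm p j i (g i) ≠ ⊤) (hD : slotNorm p j k D ≠ ⊤)
    (hf : ∀ i, k < i → i ≤ n → slotNorm p j i (f i) ≠ ⊤) :
    ∀ i ≤ n, slotNorm p j i (splice g D f k i) ≠ ⊤ := by
  intro i hi
  rcases lt_trichotomy i k with h | rfl | h
  · simpa [splice, h] using hg i h
  · simpa [splice] using hD
  · simpa [splice, h.not_gt, h.ne'] using hf i h hi

lemma slotNorm_splice_self_ne_top {p : ℝ} {g f : ℕ → E →L[ℂ] E} {k n : ℕ}
    (hg : ∀ i < k, schattenNorm p (g i) ≠ ⊤)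
    (hf : ∀ i, k < i → i ≤ n → schattenNorm p (f i) ≠ ⊤) (D : E →L[ℂ] E) :
    ∀ i ≤ n, slotNorm p k i (splice g D f k i) ≠ ⊤ :=
  slotNorm_splice_ne_top (fun i hi => slotNorm_of_ne p hi.ne (g i) ▸ hg i hi)
    (slotNorm_self p k D ▸ enorm_ne_top)
    fun i hi hin => slotNorm_of_ne p hi.ne' (f i) ▸ hf i hi hin

lemma sval_opList_le_mul_prod (f : ℕ → E →L[ℂ] E) {k p : ℕ} (hk : k ∈ Finset.range (p + 1))
    (n : ℕ) :
    sval (opList f 0 (p + 1)) (p * n) ≤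
      ‖f k‖ * ∏ i ∈ (Finset.range (p + 1)).erase k, sval (f i) n := by
  let e (i : ℕ) : ℕ := if i = k then 0 else n
  have e_of_ne {i : ℕ} (hi : i ∈ (Finset.range (p + 1)).erase k) : e i = n :=
    if_neg (Finset.ne_of_mem_erase hi)
  have sum_e : ∑ i ∈ Finset.range (p + 1), e i = p * n := by
    rw [← Finset.add_sum_erase _ _ hk, Finset.sum_congr rfl fun i hi => e_of_ne hi]
    simp [e, Finset.card_erase_of_mem hk]
  calc sval (opList f 0 (p + 1)) (p * n) ≤ ∏ i ∈ Finset.range (p + 1), sval (f i) (e i) :=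
        sum_e ▸ sval_opList_le f e (p + 1)
    _ = sval (f k) 0 * ∏ i ∈ (Finset.range (p + 1)).erase k, sval (f i) n := by
        rw [← Finset.mul_prod_erase _ _ hk, Finset.prod_congr rfl fun i hi => by rw [e_of_ne hi]]
        simp [e]
    _ ≤ _ := by
        gcongr
        · exact Finset.prod_nonneg fun i _ => sval_nonneg _ _
        · exact sval_le_norm _ _

lemma tsum_sval_opList_le (f : ℕ → E →L[ℂ] E) {k p : ℕ} (hp : p ≠ 0) (hk : k ≤ p) :
    ∑' n, ENNReal.ofReal (sval (opList f 0 (p + 1)) n) ≤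
      p * ∏ i ∈ Finset.range (p + 1), slotNorm p k i (f i) := by
  have hk' : k ∈ Finset.range (p + 1) := Finset.mem_range_succ_iff.2 hk
  set others := (Finset.range (p + 1)).erase k
  have card : others.card = p := by simp [others, Finset.card_erase_of_mem hk']
  have nonempty : others.Nonempty := Finset.card_ne_zero.1 (card ▸ hp)
  have anti : Antitone fun n => ENNReal.ofReal (sval (opList f 0 (p + 1)) n) :=
    fun _ _ h => ENNReal.ofReal_le_ofReal (sval_antitone _ h)
  have holder : ∑' n, ∏ i ∈ others, ENNReal.ofReal (sval (f i) n) ≤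
      ∏ i ∈ others, schattenNorm p (f i) := by
    simpa only [card, ← schattenNorm_eq_tsum_rpow p.cast_nonneg] using
      tsum_prod_le_prod_tsum_pow others nonempty fun i n => ENNReal.ofReal (sval (f i) n)
  have pointwise (n : ℕ) : ENNReal.ofReal (sval (opList f 0 (p + 1)) (p * n)) ≤
      ‖f k‖ₑ * ∏ i ∈ others, ENNReal.ofReal (sval (f i) n) := by
    rw [← ofReal_norm, ← ENNReal.ofReal_prod_of_nonneg fun i _ => sval_nonneg _ _,
      ← ENNReal.ofReal_mul (norm_nonneg _)]
    exact ENNReal.ofReal_le_ofReal (sval_opList_le_mul_prod f hk' n)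
  calc ∑' n, ENNReal.ofReal (sval (opList f 0 (p + 1)) n)
      ≤ p * ∑' n, ENNReal.ofReal (sval (opList f 0 (p + 1)) (p * n)) :=
        tsum_le_mul_tsum_mul_of_antitone anti hp
    _ ≤ p * ∑' n, ‖f k‖ₑ * ∏ i ∈ others, ENNReal.ofReal (sval (f i) n) := by
        gcongr with n; exact pointwise n
    _ ≤ p * (‖f k‖ₑ * ∏ i ∈ others, schattenNorm p (f i)) := by
        rw [ENNReal.tsum_mul_left]; gcongr
    _ = p * ∏ i ∈ Finset.range (p + 1), slotNorm p k i (f i) := by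
        rw [← Finset.mul_prod_erase _ _ hk', slotNorm_self,
          Finset.prod_congr rfl fun i hi => slotNorm_of_ne p (Finset.ne_of_mem_erase hi) (f i)]

lemma nuclearNorm_opList_le (f : ℕ → H →L[ℂ] H) {k p : ℕ} (hp : p ≠ 0) (hk : k ≤ p) :
    nuclearNorm (opList f 0 (p + 1)) ≤
      30 * (p * ∏ i ∈ Finset.range (p + 1), slotNorm p k i (f i)) :=
  (nuclearNorm_le_tsum_sval _).trans (by gcongr; exact tsum_sval_opList_le f hp hk)

lemma nuclearNorm_opList_ne_top {f : ℕ → H →L[ℂ] H} {k p : ℕ} (hp : p ≠ 0) (hk : k ≤ p)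
    (hf : ∀ i ≤ p, slotNorm p k i (f i) ≠ ⊤) : nuclearNorm (opList f 0 (p + 1)) ≠ ⊤ := by
  refine ne_top_of_le_ne_top (ENNReal.mul_ne_top ENNReal.ofNat_ne_top
    (ENNReal.mul_ne_top (ENNReal.natCast_ne_top p) ?_)) (nuclearNorm_opList_le f hp hk)
  exact ENNReal.prod_ne_top fun i hi => hf i (Finset.mem_range_succ_iff.1 hi)

lemma nuclearNorm_opList_sub_le (f g : ℕ → H →L[ℂ] H) {k p : ℕ} (hp : p ≠ 0) (hk : k ≤ p) :
    nuclearNorm (opList f 0 (p + 1) - opList g 0 (p + 1)) ≤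
      ∑ j ∈ Finset.range (p + 1), 30 * (p * ∏ i ∈ Finset.range (p + 1),
        if i = j then slotNorm p k i (f i - g i)
        else 2 * (slotNorm p k i (f i - g i) + slotNorm p k i (g i))) := by
  have hp1 : (1 : ℝ) ≤ p := mod_cast Nat.one_le_iff_ne_zero.2 hp
  rw [opList_sub_opList]
  refine (nuclearNorm_sum_le _ _).trans (Finset.sum_le_sum fun j _ => ?_)
  refine (nuclearNorm_opList_le _ hp hk).trans ?_
  gcongr with i
  rcases lt_trichotomy i j with h | rfl | h
  · rw [splice, if_pos h, if_neg h.ne]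
    exact le_add_self.trans (le_mul_of_one_le_left' one_le_two)
  · simp [splice]
  · rw [splice, if_neg h.not_gt, if_neg h.ne', if_neg h.ne']
    simpa using slotNorm_add_le hp1 k i (f i - g i) (g i)

lemma tendsto_nuclearNorm_opList_sub {α : Type*} {l : Filter α} {f : α → ℕ → H →L[ℂ] H}
    {g : ℕ → H →L[ℂ] H} {k p : ℕ} (hp : p ≠ 0) (hk : k ≤ p)
    (hg : ∀ i ≤ p, slotNorm p k i (g i) ≠ ⊤)
    (hf : ∀ i ≤ p, Tendsto (fun a => slotNorm p k i (f a i - g i)) l (𝓝 0)) :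
    Tendsto (fun a => nuclearNorm (opList (f a) 0 (p + 1) - opList g 0 (p + 1))) l (𝓝 0) := by
  have factor_tendsto (j i : ℕ) (hi : i ≤ p) :
      Tendsto (fun a => if i = j then slotNorm p k i (f a i - g i)
        else 2 * (slotNorm p k i (f a i - g i) + slotNorm p k i (g i))) l
        (𝓝 (if i = j then 0 else 2 * slotNorm p k i (g i))) := by
    split_ifs
    · exact hf i hi
    · simpa using ENNReal.Tendsto.const_mul ((hf i hi).add_const (slotNorm p k i (g i)))
        (.inr ENNReal.ofNat_ne_top)
  have prod_tendsto (j : ℕ) (hj : j ∈ Finset.range (p + 1)) :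
      Tendsto (fun a => ∏ i ∈ Finset.range (p + 1), if i = j then slotNorm p k i (f a i - g i)
        else 2 * (slotNorm p k i (f a i - g i) + slotNorm p k i (g i))) l (𝓝 0) := by
    have limit_zero :
        ∏ i ∈ Finset.range (p + 1), (if i = j then 0 else 2 * slotNorm p k i (g i)) = 0 :=
      Finset.prod_eq_zero hj (if_pos rfl)
    rw [← limit_zero]
    refine ENNReal.tendsto_finsetProd_of_ne_top _
      (fun i hi => factor_tendsto j i (Finset.mem_range_succ_iff.1 hi)) fun i hi => ?_
    have := hg i (Finset.mem_range_succ_iff.1 hi)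
    split_ifs
    · exact ENNReal.zero_ne_top
    · exact ENNReal.mul_ne_top ENNReal.ofNat_ne_top this
  refine tendsto_of_tendsto_of_tendsto_of_le_of_le tendsto_const_nhds ?_ (fun _ => zero_le)
    fun a => nuclearNorm_opList_sub_le (f a) g hp hk
  have sum_tendsto := tendsto_finsetSum (Finset.range (p + 1)) fun j hj =>
    ENNReal.Tendsto.const_mul (a := 30)
      (ENNReal.Tendsto.const_mul (a := p) (prod_tendsto j hj) (.inr (ENNReal.natCast_ne_top p)))
      (.inr ENNReal.ofNat_ne_top)
  simpa using sum_tendsto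

end OrderedProducts

section Supertrace

/-! ### Moving the differential past a word -/

variable {E : Type*} [NormedAddCommGroup E] [InnerProductSpace ℂ E]

lemma commOp_sub (F S T : E →L[ℂ] E) : commOp F (S - T) = commOp F S - commOp F T := by
  simp only [commOp]
  noncomm_ring

lemma mul_commOp {F : E →L[ℂ] E} (hF2 : F * F = 1) (T : E →L[ℂ] E) :
    F * commOp F T = -(commOp F T * F) := by
  simp only [commOp, mul_sub, sub_mul, ← mul_assoc, hF2, mul_assoc _ F F, one_mul, mul_one,
    neg_sub]

lemma mul_opList {F : E →L[ℂ] E} {f : ℕ → E →L[ℂ] E} (hf : ∀ i, F * f i = -(f i * F)) (s k : ℕ) :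
    F * opList f s k = (-1 : ℂ) ^ k • (opList f s k * F) := by
  induction k with
  | zero => simp [opList_zero]
  | succ k ih =>
    rw [opList_succ_right, ← mul_assoc, ih, smul_mul_assoc, mul_assoc, hf, mul_neg, smul_neg,
      pow_succ, mul_neg_one, neg_smul, mul_assoc]

lemma anticommutator_eq {F L R : E →L[ℂ] E} {c : ℂ} (hL : F * L = c • (L * F))
    (hR : R * F = -(c • (F * R))) (y z : E →L[ℂ] E) :
    F * (y * L * z * R) + y * L * z * R * F =
      commOp F y * L * z * R + c • (y * L * commOp F z * R) := by
  have move_left : y * (F * L) * z * R = c • (y * L * (F * z) * R) := by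
    rw [hL]
    simp only [mul_smul_comm, smul_mul_assoc, mul_assoc]
  have move_right : y * L * z * (R * F) = -(c • (y * L * (z * F) * R)) := by
    rw [hR]
    simp only [mul_neg, mul_smul_comm, mul_assoc]
  calc F * (y * L * z * R) + y * L * z * R * F
      = commOp F y * L * z * R + (y * (F * L) * z * R + y * L * z * (R * F)) := by
        simp only [commOp]
        noncomm_ring
    _ = commOp F y * L * z * R + c • (y * L * commOp F z * R) := by
        rw [move_left, move_right, ← sub_eq_add_neg, ← smul_sub]
        simp only [commOp, mul_sub, sub_mul]

/-- The operator `Y = F * X + X * F` satisfies `F * Y * F = Y`, while conjugation by `F` changes the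
sign of `ε`; only `Y`, not `X`, has to be trace class. -/
lemma opTrace_mul_anticommutator_eq_zero {ε F X : H →L[ℂ] H} (hF2 : F * F = 1)
    (hFε : F * ε = -(ε * F)) (hX : nuclearNorm (F * X + X * F) ≠ ⊤) :
    opTrace (ε * (F * X + X * F)) = 0 := by
  set Y := F * X + X * F with hY
  have conj_Y : F * Y * F = Y := by
    rw [hY, mul_add, add_mul, ← mul_assoc, hF2, one_mul, mul_assoc F (X * F), mul_assoc X, hF2,
      mul_one, add_comm]
  have conj_ε : F * (ε * F) = -ε := by
    rw [← mul_assoc, hFε, neg_mul, mul_assoc, hF2, mul_one]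
  have neg_self : opTrace (ε * Y) = -opTrace (ε * Y) :=
    calc opTrace (ε * Y) = opTrace (ε * F * Y * F) := by
          rw [mul_assoc ε F Y, mul_assoc ε, conj_Y]
      _ = opTrace (F * (ε * F * Y)) := (opTrace_mul_comm F (nuclearNorm_mul_ne_top _ hX)).symm
      _ = -opTrace (ε * Y) := by rw [← mul_assoc, conj_ε, neg_mul, opTrace_neg]
  exact self_eq_neg.1 neg_self

lemma opTrace_mul_commOp_eq {ε F L R : H →L[ℂ] H} {c : ℂ} (hF2 : F * F = 1)
    (hFε : F * ε = -(ε * F)) (hc : c * c = 1) (hL : F * L = c • (L * F))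
    (hR : R * F = -(c • (F * R))) {y z : H →L[ℂ] H}
    (hy : nuclearNorm (commOp F y * L * z * R) ≠ ⊤)
    (hz : nuclearNorm (y * L * commOp F z * R) ≠ ⊤) :
    opTrace (ε * (y * L * commOp F z * R)) = -c * opTrace (ε * (commOp F y * L * z * R)) := by
  have expand := anticommutator_eq hL hR y z
  have hcz : nuclearNorm (c • (y * L * commOp F z * R)) ≠ ⊤ := by
    simpa only [smul_mul_assoc, one_mul] using nuclearNorm_mul_ne_top (c • 1) hz
  have hX : nuclearNorm (F * (y * L * z * R) + y * L * z * R * F) ≠ ⊤ := by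
    rw [expand]
    exact ne_top_of_le_ne_top (ENNReal.add_ne_top.2 ⟨hy, hcz⟩) (nuclearNorm_add_le _ _)
  have vanish := opTrace_mul_anticommutator_eq_zero hF2 hFε hX
  rw [expand, mul_add, opTrace_add (nuclearNorm_mul_ne_top ε hy) (nuclearNorm_mul_ne_top ε hcz),
    mul_smul_comm, opTrace_smul] at vanish
  linear_combination c * vanish - hc * opTrace (ε * (y * L * commOp F z * R))

lemma opTrace_mul_opList_mul_commOp_eq {ε F : H →L[ℂ] H} (hF2 : F * F = 1)
    (hFε : F * ε = -(ε * F)) {g f : ℕ → H →L[ℂ] H} (hg : ∀ i, F * g i = -(g i * F))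
    (hf : ∀ i, F * f i = -(f i * F)) {i l j r : ℕ} (hlr : Odd (l + r)) {y z : H →L[ℂ] H}
    (hy : nuclearNorm (commOp F y * opList g i l * z * opList f j r) ≠ ⊤)
    (hz : nuclearNorm (y * opList g i l * commOp F z * opList f j r) ≠ ⊤) :
    opTrace (ε * (y * opList g i l * commOp F z * opList f j r)) =
      (-1) ^ (l + 1) * opTrace (ε * (commOp F y * opList g i l * z * opList f j r)) := by
  have sign_sq (n : ℕ) : (-1 : ℂ) ^ n * (-1) ^ n = 1 := by rw [← mul_pow]; simp
  have sign_mul : (-1 : ℂ) ^ l * (-1) ^ r = -1 := by rw [← pow_add, hlr.neg_one_pow]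
  have sign_eq : (-1 : ℂ) ^ r = -(-1) ^ l := by
    linear_combination (-1 : ℂ) ^ l * sign_mul - (-1 : ℂ) ^ r * sign_sq l
  have move_right : opList f j r * F = -((-1 : ℂ) ^ l • (F * opList f j r)) := by
    rw [← neg_smul, ← sign_eq, mul_opList hf, smul_smul, sign_sq, one_smul]
  rw [opTrace_mul_commOp_eq hF2 hFε (sign_sq l) (mul_opList hg i l) move_right hy hz, pow_succ,
    mul_neg_one]

end Supertrace

section Character

/-! ### The character and its derivative -/

variable {E : Type*} [NormedAddCommGroup E] [InnerProductSpace ℂ E]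

/-- The sequence of the differentials `[F, x i]` of a sequence of operators. -/
def commSeq (F : E →L[ℂ] E) (x : ℕ → E →L[ℂ] E) (i : ℕ) : E →L[ℂ] E := commOp F (x i)

/-- The factors `x 0, [F, x 1], [F, x 2], …` of the character. -/
def characterWord (F : E →L[ℂ] E) (x : ℕ → E →L[ℂ] E) : ℕ → E →L[ℂ] E :=
  Function.update (commSeq F x) 0 (x 0)

lemma characterWord_zero (F : E →L[ℂ] E) (x : ℕ → E →L[ℂ] E) : characterWord F x 0 = x 0 :=
  Function.update_self ..

lemma characterWord_of_ne_zero (F : E →L[ℂ] E) (x : ℕ → E →L[ℂ] E) {i : ℕ} (h : i ≠ 0) :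
    characterWord F x i = commSeq F x i :=
  Function.update_of_ne h ..

lemma opList_characterWord_succ (F : E →L[ℂ] E) (x : ℕ → E →L[ℂ] E) (s k : ℕ) :
    opList (characterWord F x) (s + 1) k = opList (commSeq F x) (s + 1) k :=
  opList_congr fun _ hi _ => characterWord_of_ne_zero F x (by omega)

lemma opList_characterWord_zero (F : E →L[ℂ] E) (x : ℕ → E →L[ℂ] E) (k : ℕ) :
    opList (characterWord F x) 0 (k + 1) = x 0 * opList (commSeq F x) 1 k := by
  rw [opList_succ, characterWord_zero, opList_characterWord_succ]

lemma slotNorm_characterWord_ne_top {F : E →L[ℂ] E} {q : ℝ} {x : ℕ → E →L[ℂ] E} {i : ℕ}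
    (hx : schattenNorm q (commSeq F x i) ≠ ⊤) : slotNorm q 0 i (characterWord F x i) ≠ ⊤ := by
  rcases eq_or_ne i 0 with rfl | h
  · simp [slotNorm_self]
  · rwa [slotNorm_of_ne q h, characterWord_of_ne_zero F x h]

/-- The character cochain of the Fredholm module `(ε, F)`, without its normalization `(2iπ)ᵐ m!`,
evaluated on the operators `x 0, …, x p`. -/
def characterTrace (ε F : H →L[ℂ] H) (p : ℕ) (x : ℕ → H →L[ℂ] H) : ℂ :=
  opTrace (ε * x 0 * opList (commSeq F x) 1 p)

lemma characterTrace_eq_opTrace_opList (ε F : H →L[ℂ] H) (p : ℕ) (x : ℕ → H →L[ℂ] H) :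
    characterTrace ε F p x = opTrace (ε * opList (characterWord F x) 0 (p + 1)) := by
  rw [opList_characterWord_zero, ← mul_assoc, characterTrace]

variable {ε F : H →L[ℂ] H} {p : ℕ}

lemma nuclearNorm_opList_splice_characterWord_ne_top (hp0 : p ≠ 0) {x y : ℕ → H →L[ℂ] H}
    (hx : ∀ i ≤ p, schattenNorm p (commSeq F x i) ≠ ⊤)
    (hy : ∀ i ≤ p, schattenNorm p (commSeq F y i) ≠ ⊤) {k : ℕ} (hk : k ≤ p) :
    nuclearNorm (opList (splice (characterWord F y) (characterWord F x k - characterWord F y k)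
      (characterWord F x) k) 0 (p + 1)) ≠ ⊤ := by
  have hp1 : (1 : ℝ) ≤ p := mod_cast Nat.one_le_iff_ne_zero.2 hp0
  refine nuclearNorm_opList_ne_top hp0 p.zero_le (slotNorm_splice_ne_top
    (fun i hi => slotNorm_characterWord_ne_top (hy i (by omega))) ?_
    fun i _ hi => slotNorm_characterWord_ne_top (hx i hi))
  rcases eq_or_ne k 0 with rfl | h
  · simp [slotNorm_self]
  · rw [slotNorm_of_ne _ h, characterWord_of_ne_zero F x h, characterWord_of_ne_zero F y h]
    exact ne_top_of_le_ne_top (ENNReal.mul_ne_top ENNReal.ofNat_ne_top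
      (ENNReal.add_ne_top.2 ⟨hx k hk, hy k hk⟩)) (schattenNorm_sub_le hp1 _ _)

/-- For `k > 0` the commutator with `F` is moved from the `k`-th factor onto the first one, which
becomes `[F, y 0]`. -/
lemma opTrace_opList_splice_characterWord (hp : Even p) (hp0 : p ≠ 0) (hF2 : F * F = 1)
    (hFε : F * ε = -(ε * F)) {x y : ℕ → H →L[ℂ] H}
    (hx : ∀ i ≤ p, schattenNorm p (commSeq F x i) ≠ ⊤)
    (hy : ∀ i ≤ p, schattenNorm p (commSeq F y i) ≠ ⊤) {k : ℕ} (hk : k ≤ p) :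
    opTrace (ε * opList (splice (characterWord F y) (characterWord F x k - characterWord F y k)
        (characterWord F x) k) 0 (p + 1)) =
      (-1) ^ k *
        opTrace (ε * opList (splice (commSeq F y) (x k - y k) (commSeq F x) k) 0 (p + 1)) := by
  have before := nuclearNorm_opList_splice_characterWord_ne_top hp0 hx hy hk
  have after := nuclearNorm_opList_ne_top hp0 hk (slotNorm_splice_self_ne_top
    (fun i hi => hy i (hi.le.trans hk)) (fun i _ hi => hx i hi) (x k - y k))
  rw [opList_splice _ _ _ hk, opList_characterWord_succ] at before ⊢
  rw [opList_splice _ _ _ hk] at after ⊢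
  rcases k with _ | l
  · simp [opList_zero, characterWord_zero]
  have anticomm (z : ℕ → H →L[ℂ] H) (i : ℕ) : F * commSeq F z i = -(commSeq F z i * F) :=
    mul_commOp hF2 (z i)
  have letter_eq : characterWord F x (l + 1) - characterWord F y (l + 1) =
      commOp F (x (l + 1) - y (l + 1)) := by
    rw [characterWord_of_ne_zero F x l.succ_ne_zero, characterWord_of_ne_zero F y l.succ_ne_zero,
      commOp_sub, commSeq, commSeq]
  have head_eq : opList (commSeq F y) 0 (l + 1) = commOp F (y 0) * opList (commSeq F y) 1 l :=
    opList_succ ..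
  have odd_length : Odd (l + (p - (l + 1))) := by
    obtain ⟨m, rfl⟩ := hp
    exact ⟨m - 1, by omega⟩
  rw [opList_characterWord_zero, letter_eq] at before ⊢
  rw [head_eq] at after ⊢
  exact opTrace_mul_opList_mul_commOp_eq hF2 hFε (anticomm y) (anticomm x) odd_length after before

lemma characterTrace_sub_eq_sum (hp : Even p) (hp0 : p ≠ 0) (hF2 : F * F = 1)
    (hFε : F * ε = -(ε * F)) {x y : ℕ → H →L[ℂ] H}
    (hx : ∀ i ≤ p, schattenNorm p (commSeq F x i) ≠ ⊤)
    (hy : ∀ i ≤ p, schattenNorm p (commSeq F y i) ≠ ⊤) :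
    characterTrace ε F p x - characterTrace ε F p y = ∑ k ∈ Finset.range (p + 1), (-1) ^ k *
      opTrace (ε * opList (splice (commSeq F y) (x k - y k) (commSeq F x) k) 0 (p + 1)) := by
  have word_ne_top {z : ℕ → H →L[ℂ] H} (hz : ∀ i ≤ p, schattenNorm p (commSeq F z i) ≠ ⊤) :
      nuclearNorm (ε * opList (characterWord F z) 0 (p + 1)) ≠ ⊤ :=
    nuclearNorm_mul_ne_top ε (nuclearNorm_opList_ne_top hp0 p.zero_le fun i hi =>
      slotNorm_characterWord_ne_top (hz i hi))
  rw [characterTrace_eq_opTrace_opList, characterTrace_eq_opTrace_opList,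
    ← opTrace_sub (word_ne_top hx) (word_ne_top hy), ← mul_sub, opList_sub_opList,
    Finset.mul_sum, opTrace_sum fun k hk => nuclearNorm_mul_ne_top ε
      (nuclearNorm_opList_splice_characterWord_ne_top hp0 hx hy (Finset.mem_range_succ_iff.1 hk))]
  exact Finset.sum_congr rfl fun k hk => opTrace_opList_splice_characterWord hp hp0 hF2 hFε hx hy
    (Finset.mem_range_succ_iff.1 hk)

lemma tendsto_opTrace_opList_splice {α : Type*} {l : Filter α} (hp0 : p ≠ 0) (ε : H →L[ℂ] H)
    {f : α → ℕ → H →L[ℂ] H} {g : ℕ → H →L[ℂ] H} {D : α → H →L[ℂ] H} {D₀ : H →L[ℂ] H} {k : ℕ}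
    (hk : k ≤ p) (hg : ∀ i ≤ p, schattenNorm p (g i) ≠ ⊤)
    (hf : ∀ i ≤ p, Tendsto (fun a => schattenNorm p (f a i - g i)) l (𝓝 0))
    (hD : Tendsto D l (𝓝 D₀)) :
    Tendsto (fun a => opTrace (ε * opList (splice g (D a) (f a) k) 0 (p + 1))) l
      (𝓝 (opTrace (ε * opList (splice g D₀ g k) 0 (p + 1)))) := by
  have hp_pos : (0 : ℝ) < p := mod_cast Nat.pos_of_ne_zero hp0
  have limit_ne_top : ∀ i ≤ p, slotNorm p k i (splice g D₀ g k i) ≠ ⊤ :=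
    slotNorm_splice_self_ne_top (fun i hi => hg i (by omega)) (fun i _ hi => hg i hi) D₀
  refine tendsto_opTrace_mul ε (nuclearNorm_opList_ne_top hp0 hk limit_ne_top)
    (tendsto_nuclearNorm_opList_sub hp0 hk limit_ne_top fun i hi => ?_)
  rcases lt_trichotomy i k with h | rfl | h
  · simp [splice, h, slotNorm_of_ne _ h.ne, schattenNorm_zero hp_pos, tendsto_const_nhds]
  · have := tendsto_iff_norm_sub_tendsto_zero.1 hD
    simp only [splice, lt_irrefl, if_false, if_true, slotNorm_self, ← ofReal_norm]
    simpa using ENNReal.tendsto_ofReal this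
  · simpa [splice, h.not_gt, h.ne', slotNorm_of_ne _ h.ne'] using hf i hi

lemma slope_characterTrace_eq_sum (hp : Even p) (hp0 : p ≠ 0) (hF2 : F * F = 1)
    (hFε : F * ε = -(ε * F)) {x : ℝ → ℕ → H →L[ℂ] H} {t r : ℝ}
    (ht : ∀ i ≤ p, schattenNorm p (commSeq F (x t) i) ≠ ⊤)
    (hr : ∀ i ≤ p, schattenNorm p (commSeq F (x r) i) ≠ ⊤) :
    slope (fun r => characterTrace ε F p (x r)) t r = ∑ k ∈ Finset.range (p + 1), (-1) ^ k *
      opTrace (ε * opList (splice (commSeq F (x t)) (slope (fun r => x r k) t r)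
        (commSeq F (x r)) k) 0 (p + 1)) := by
  rw [slope_def_module, characterTrace_sub_eq_sum hp hp0 hF2 hFε hr ht, Finset.smul_sum]
  refine Finset.sum_congr rfl fun k hk => ?_
  rw [slope_def_module, ← Complex.coe_smul (r - t)⁻¹ (x r k - x t k),
    opList_splice_smul _ _ _ _ (Finset.mem_range_succ_iff.1 hk), mul_smul_comm, opTrace_smul,
    mul_left_comm, ← Complex.real_smul]

end Character

theorem deriv_of_character_general {p : ℕ} (hp : Even p) (hp0 : p ≠ 0) {ε F : H →L[ℂ] H}
    (hF2 : F * F = 1) (hFε : F * ε = -(ε * F)) {s : Set ℝ} {t : ℝ} {x : ℝ → ℕ → H →L[ℂ] H}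
    {δ : ℕ → H →L[ℂ] H} (hS : ∀ i ≤ p, schattenNorm p (commOp F (x t i)) ≠ ⊤)
    (hScont : ∀ i ≤ p, Tendsto
      (fun r => schattenNorm p (commOp F (x r i) - commOp F (x t i))) (𝓝[s] t) (𝓝 0))
    (hderiv : ∀ i ≤ p, HasDerivWithinAt (fun r => x r i) (δ i) s t) :
    HasDerivWithinAt (fun r => characterTrace ε F p (x r))
      (∑ k ∈ Finset.range (p + 1), (-1 : ℂ) ^ k *
        opTrace (ε * opList (commSeq F (x t)) 0 k * δ k *
          opList (commSeq F (x t)) (k + 1) (p - k))) s t := by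
  have hp1 : (1 : ℝ) ≤ p := mod_cast Nat.one_le_iff_ne_zero.2 hp0
  have near : 𝓝[s \ {t}] t ≤ 𝓝[s] t := nhdsWithin_mono t Set.sdiff_subset
  have finite_near : ∀ᶠ r in 𝓝[s \ {t}] t, ∀ i ≤ p, schattenNorm p (commOp F (x r i)) ≠ ⊤ :=
    (Set.finite_le_nat p).eventually_all.2 fun i hi =>
      eventually_schattenNorm_ne_top hp1 (hS i hi) ((hScont i hi).mono_left near)
  have word_eq (k : ℕ) (hk : k ∈ Finset.range (p + 1)) :
      ε * opList (commSeq F (x t)) 0 k * δ k * opList (commSeq F (x t)) (k + 1) (p - k) =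
        ε * opList (splice (commSeq F (x t)) (δ k) (commSeq F (x t)) k) 0 (p + 1) := by
    simp only [opList_splice _ _ _ (Finset.mem_range_succ_iff.1 hk), mul_assoc]
  rw [hasDerivWithinAt_iff_tendsto_slope, Finset.sum_congr rfl fun k hk => by rw [word_eq k hk]]
  refine Tendsto.congr' (finite_near.mono fun r hr =>
    (slope_characterTrace_eq_sum hp hp0 hF2 hFε hS hr).symm)
    (tendsto_finsetSum _ fun k hk => Tendsto.const_mul _ ?_)
  have hk := Finset.mem_range_succ_iff.1 hk
  exact tendsto_opTrace_opList_splice hp0 ε hk hS (fun i hi => (hScont i hi).mono_left near)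
    (hasDerivWithinAt_iff_tendsto_slope.1 (hderiv k hk))

/-- Differentiability of the character along a homotopy of representations.  Let `p = 2m`
be a positive even integer, `(H, ε)` ℤ₂-graded, `F² = 1`, `Fε = -εF`, and
`ρ_t : A → B(H)` homomorphisms into even operators such that `[F,ρ_t(a)]` is `p`-Schatten,
`t ↦ [F,ρ_t(a)]` is continuous in the `p`-Schatten norm, and `t ↦ ρ_t(a)` is `C¹` in
operator norm with derivative `δ_t(a)`.  Then
`t ↦ τ^p_t(a₀,…,a_p) = (2iπ)^m m! Trace(ε ρ_t(a₀)[F,ρ_t(a₁)]⋯[F,ρ_t(a_p)])` is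
differentiable on `[0,1]`, with the stated derivative. -/
theorem deriv_of_character (m p : ℕ) (hm : 0 < m) (hp : p = 2 * m)
    (ε F : H →L[ℂ] H) (hε : IsSelfAdjoint ε) (hε2 : ε * ε = 1) (hF2 : F * F = 1)
    (hFε : F * ε = -(ε * F))
    (ρ : ℝ → (A →ₙₐ[ℂ] (H →L[ℂ] H)))
    (heven : ∀ t ∈ Set.Icc (0 : ℝ) 1, ∀ a : A, ε * ρ t a = ρ t a * ε)
    (hS : ∀ t ∈ Set.Icc (0 : ℝ) 1, ∀ a : A, MemSchatten (p : ℝ) (commOp F (ρ t a)))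
    (hScont : ∀ a : A, ∀ t ∈ Set.Icc (0 : ℝ) 1,
      Filter.Tendsto (fun s => schattenNorm (p : ℝ) (commOp F (ρ s a) - commOp F (ρ t a)))
        (nhdsWithin t (Set.Icc (0 : ℝ) 1)) (nhds 0))
    (δ : ℝ → A → (H →L[ℂ] H))
    (hderiv : ∀ a : A, ∀ t ∈ Set.Icc (0 : ℝ) 1,
      HasDerivWithinAt (fun s => ρ s a) (δ t a) (Set.Icc (0 : ℝ) 1) t)
    (hδcont : ∀ a : A, ContinuousOn (fun t => δ t a) (Set.Icc (0 : ℝ) 1)) :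
    ∀ a : Fin (p + 1) → A, ∀ t ∈ Set.Icc (0 : ℝ) 1,
      HasDerivWithinAt
        (fun s => (2 * Complex.I * (Real.pi : ℂ)) ^ m * (Nat.factorial m : ℂ) *
          opTrace (ε * ρ s (a 0) *
            opList (fun i => commOp F (ρ s (natIdx (m := p) a i))) 1 p))
        ((2 * Complex.I * (Real.pi : ℂ)) ^ m * (Nat.factorial m : ℂ) *
          ∑ k ∈ Finset.range (p + 1), (-1 : ℂ) ^ k *
            opTrace (ε * opList (fun i => commOp F (ρ t (natIdx (m := p) a i))) 0 k *
              δ t (natIdx (m := p) a k) *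
              opList (fun i => commOp F (ρ t (natIdx (m := p) a i))) (k + 1) (p - k)))
        (Set.Icc (0 : ℝ) 1) t := by
  intro a t ht
  exact (deriv_of_character_general (hp ▸ even_two_mul m) (by omega) hF2 hFε
    (x := fun r i => ρ r (natIdx a i)) (fun i _ => (hS t ht _).2.ne)
    (fun i _ => hScont _ t ht) (fun i _ => hderiv _ t ht)).const_mul _
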